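/- The Basilica generator a has infinite order as a permutation of List Bool: for every natural number n ≠ 0, a ^ n ≠ 1 (equivalently, ¬ IsOfFinOrder a). -/

import Mathlib

/-!
If `a ^ n = 1`, then `b ^ n = 1`, because `a` acts on the subtree below `true` as `b`
(`a_pow_true`). Since `b` flips the first letter, `n` must be even, say `n = m + m`, and since
`b ^ 2` acts on the subtree below `false` as `a` (`b_pow_false`), it follows that `a ^ m = 1`.
Infinite descent on `n` then forces `n = 0`.
-/

namespace Basilica

mutual
  /-- Underlying map of the Basilica generator `a`. -/
  def aF : List Bool → List Bool
    | [] => []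
    | false :: w => false :: w
    | true :: w => true :: bF w
  /-- Underlying map of the Basilica generator `b`. -/
  def bF : List Bool → List Bool
    | [] => []
    | false :: w => true :: w
    | true :: w => false :: aF w
end

mutual
  /-- Inverse of `aF`. -/
  def aI : List Bool → List Bool
    | [] => []
    | false :: w => false :: w
    | true :: w => true :: bI w
  /-- Inverse of `bF`. -/
  def bI : List Bool → List Bool
    | [] => []
    | false :: w => true :: aI w
    | true :: w => false :: w
end

theorem basilica_inv : ∀ w : List Bool,
    aI (aF w) = w ∧ bI (bF w) = w ∧ aF (aI w) = w ∧ bF (bI w) = w := by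
  intro w
  induction w with
  | nil => simp [aF, bF, aI, bI]
  | cons x w ih =>
    cases x <;>
      simp [aF, bF, aI, bI, ih.1, ih.2.1, ih.2.2.1, ih.2.2.2]

/-- The Basilica generator `a` as a permutation of the binary tree `List Bool`:
`a [] = []`, `a (false :: w) = false :: w`, `a (true :: w) = true :: b w`. -/
def a : Equiv.Perm (List Bool) :=
  ⟨aF, aI, fun w => (basilica_inv w).1, fun w => (basilica_inv w).2.2.1⟩

/-- The Basilica generator `b` as a permutation of the binary tree `List Bool`:
`b [] = []`, `b (false :: w) = true :: w`, `b (true :: w) = false :: a w`. -/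
def b : Equiv.Perm (List Bool) :=
  ⟨bF, bI, fun w => (basilica_inv w).2.1, fun w => (basilica_inv w).2.2.2⟩

/-- Underlying map of the pair `(g, h)` acting on the two subtrees. -/
def pairF (g h : List Bool → List Bool) : List Bool → List Bool
  | [] => []
  | false :: w => false :: g w
  | true :: w => true :: h w

/-- The permutation of `List Bool` acting as `g` on the subtree below `false`
and as `h` on the subtree below `true`, fixing the root. -/
def pair (g h : Equiv.Perm (List Bool)) : Equiv.Perm (List Bool) :=
  ⟨pairF g h, pairF g.symm h.symm,
    fun w => by cases w with
      | nil => rfl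
      | cons x w => cases x <;> simp [pairF],
    fun w => by cases w with
      | nil => rfl
      | cons x w => cases x <;> simp [pairF]⟩

/-- The Basilica group: the subgroup of `Equiv.Perm (List Bool)` generated by `a` and `b`. -/
def B : Subgroup (Equiv.Perm (List Bool)) := Subgroup.closure {a, b}

end Basilica

namespace Basilica

theorem a_pow_true (n : ℕ) (w : List Bool) : (a ^ n) (true :: w) = true :: (b ^ n) w := by
  induction n with
  | zero => rfl
  | succ n ih =>
    rw [pow_succ', pow_succ', Equiv.Perm.mul_apply, Equiv.Perm.mul_apply, ih]
    simp [a, b, aF]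

theorem b_pow_false (m : ℕ) (w : List Bool) :
    (b ^ (m + m)) (false :: w) = false :: (a ^ m) w := by
  induction m with
  | zero => rfl
  | succ m ih =>
    rw [show m + 1 + (m + 1) = m + m + 1 + 1 by omega, pow_succ', pow_succ', pow_succ',
      Equiv.Perm.mul_apply, Equiv.Perm.mul_apply, Equiv.Perm.mul_apply, ih]
    simp [a, b, bF]

theorem a_pow_ne_one (n : ℕ) (hn : n ≠ 0) : a ^ n ≠ 1 := by
  induction n using Nat.strong_induction_on with
  | _ n ih =>
    intro h
    have hb : ∀ w, (b ^ n) w = w := fun w => by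
      have := a_pow_true n w
      rw [h] at this
      simpa using this.symm
    rcases Nat.even_or_odd' n with ⟨m, rfl | rfl⟩
    · refine ih m (by omega) (by omega) (Equiv.ext fun w => ?_)
      have := b_pow_false m w
      rw [← two_mul, hb] at this
      simpa using this.symm
    · -- An odd power of `b` moves the vertex `[false]` to a word starting with `true`.
      have := hb [false]
      rw [pow_succ', Equiv.Perm.mul_apply, two_mul, b_pow_false] at this
      simp [b, bF] at this

end Basilica

open Basilica in
/-- The Basilica generator `a` has infinite order: `a ^ n ≠ 1` for all `n ≠ 0`;
equivalently, `a` is not of finite order. -/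
theorem basilica_a_infinite_order :
    (∀ n : ℕ, n ≠ 0 → a ^ n ≠ 1) ∧ ¬ IsOfFinOrder a := by
  exact ⟨a_pow_ne_one, fun h =>
    let ⟨n, hn, h1⟩ := isOfFinOrder_iff_pow_eq_one.mp h
    a_pow_ne_one n hn.ne' h1⟩
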